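/- Let K be an algebraically closed field and let n ≥ 1. Let f₁, …, fₙ be nonzero polynomials in n variables over K (elements of MvPolynomial (Fin n) K). If their common zero set Z = {p : Fin n → K | fᵢ(p) = 0 for all i} is finite, then the cardinality of Z is at most the product of the total degrees of the fᵢ, i.e. Z.ncard ≤ ∏ᵢ totalDegree(fᵢ). -/

import Mathlib

open MvPolynomial

/-- evaluation at `t = 0`, `x = z` -/
noncomputable def bzEval {K : Type*} [Field K] {n : ℕ} (z : Fin n → K) :
    MvPolynomial (Fin n) (Polynomial K) →+* K :=
  eval₂Hom (Polynomial.evalRingHom 0) z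

/-- partial evaluation -/
noncomputable def bzPart {K : Type*} [Field K] {n : ℕ} (z : Fin n → K) (k : ℕ) :
    MvPolynomial (Fin n) (Polynomial K) →+* MvPolynomial (Fin n) K :=
  eval₂Hom (C.comp (Polynomial.evalRingHom 0)) (fun i => if (i : ℕ) < k then C (z i) else X i)

lemma bz_height_part {K : Type*} [Field K] {n : ℕ} (z : Fin n → K) (k : ℕ) (hk : k ≤ n) :
    ((k : ℕ∞) + 1) ≤ (RingHom.ker (bzPart z k)).height := by
  have hp : ∀ k, (RingHom.ker (bzPart z k)).IsPrime := fun k => RingHom.ker_isPrime _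
  induction k with
  | zero =>
    have h : (⊥ : Ideal (MvPolynomial (Fin n) (Polynomial K))) < RingHom.ker (bzPart z 0) := by
      rw [bot_lt_iff_ne_bot]
      intro h
      have h1 : (C Polynomial.X : MvPolynomial (Fin n) (Polynomial K)) ∈ RingHom.ker (bzPart z 0) := by
        simp [RingHom.mem_ker, bzPart]
      rw [h] at h1
      simp at h1
    have := Ideal.height_add_one_le_of_lt_of_isPrime h
    refine le_trans ?_ this
    simp
  | succ k ih =>
    have h : RingHom.ker (bzPart z k) < RingHom.ker (bzPart z (k+1)) := by
      refine lt_of_le_of_ne ?_ ?_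
      · have hc : bzPart z (k+1) = (eval₂Hom C (fun i => if (i : ℕ) < k+1 then C (z i) else X i) :
            MvPolynomial (Fin n) K →+* MvPolynomial (Fin n) K).comp (bzPart z k) := by
          apply MvPolynomial.ringHom_ext
          · intro r; simp [bzPart]
          · intro i
            simp only [bzPart, RingHom.comp_apply, coe_eval₂Hom, eval₂_X]
            by_cases h : (i : ℕ) < k
            · simp [h, Nat.lt_succ_of_lt h]
            · simp [h]
        intro x hx
        rw [RingHom.mem_ker] at hx ⊢
        rw [hc, RingHom.comp_apply, hx, map_zero]
      · intro h
        have h1 : (X ⟨k, hk⟩ - C (Polynomial.C (z ⟨k, hk⟩)) :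
            MvPolynomial (Fin n) (Polynomial K)) ∈ RingHom.ker (bzPart z (k+1)) := by
          simp [RingHom.mem_ker, bzPart]
        rw [← h] at h1
        simp only [RingHom.mem_ker, bzPart, map_sub, coe_eval₂Hom, eval₂_X, eval₂_C] at h1
        have h2 := congrArg (eval (fun _ => z ⟨k, hk⟩ + 1)) h1
        simp at h2
    have h3 := Ideal.height_add_one_le_of_lt_of_isPrime h
    refine le_trans ?_ h3
    have := ih (by omega)
    push_cast
    gcongr

lemma bz_height {K : Type*} [Field K] {n : ℕ} (z : Fin n → K) :
    ((n : ℕ∞) + 1) ≤ (RingHom.ker (bzEval z)).height := by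
  refine (bz_height_part z n le_rfl).trans (Ideal.height_mono ?_)
  have hc : bzEval z = (eval z).comp (bzPart z n) := by
    apply MvPolynomial.ringHom_ext
    · intro r; simp [bzPart, bzEval]
    · intro i; simp [bzPart, bzEval]
  intro x hx
  rw [RingHom.mem_ker] at hx ⊢
  rw [hc, RingHom.comp_apply, hx, map_zero]

lemma bz_sep {K : Type*} [Field K] [Infinite K] {n : ℕ} (Z : Finset (Fin n → K)) :
    ∃ c : Fin n → K, Set.InjOn (fun p : Fin n → K => ∑ i, c i * p i) Z := by
  classical
  let P : MvPolynomial (Fin n) K :=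
    ∏ q ∈ Z.offDiag, ∑ i, C (q.1 i - q.2 i) * X i
  have hP : P ≠ 0 := by
    rw [Finset.prod_ne_zero_iff]
    intro q hq h
    obtain ⟨-, -, hne⟩ := Finset.mem_offDiag.1 hq
    apply hne
    funext i
    have := congrArg (eval (Pi.single i 1)) h
    simp [Pi.single_apply] at this
    exact sub_eq_zero.1 this
  obtain ⟨c, hc⟩ : ∃ c, eval c P ≠ 0 := by
    by_contra! h
    exact hP (MvPolynomial.funext (by simpa using h))
  refine ⟨c, fun p hp q hq hpq => ?_⟩
  by_contra hne
  rw [map_prod, Finset.prod_ne_zero_iff] at hc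
  apply hc (p, q) (Finset.mem_offDiag.2 ⟨hp, hq, hne⟩)
  simp only [map_sum, map_mul, eval_C, eval_X, sub_mul, Finset.sum_sub_distrib, sub_eq_zero]
  simpa [mul_comm] using hpq

lemma bz_mem_span {R σ : Type*} [CommRing R] (D : ℕ) (h : MvPolynomial σ R)
    (hD : h.totalDegree ≤ D) :
    h ∈ Submodule.span R ((fun a => monomial a (1:R)) '' {a : σ →₀ ℕ | a.degree ≤ D}) := by
  rw [← support_sum_monomial_coeff h]
  refine Submodule.sum_mem _ fun a ha => ?_
  have : monomial a (coeff a h) = coeff a h • monomial a (1:R) := by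
    simp [smul_monomial]
  rw [this]
  refine Submodule.smul_mem _ _ (Submodule.subset_span ⟨a, ?_, rfl⟩)
  exact le_trans (le_totalDegree ha) hD

lemma bz_nakayama {R : Type*} [CommRing R] {n : ℕ} (d : Fin n → ℕ)
    (g : Fin n → MvPolynomial (Fin n) R) (hg : ∀ i, (g i).totalDegree ≤ d i) (τ : R) (D : ℕ) :
    ∃ r : R, r - 1 ∈ Ideal.span {τ} ∧ ∀ h : MvPolynomial (Fin n) R, h.totalDegree ≤ D →
      r • h ∈ Submodule.span R (Set.range fun a : (∀ i, Fin (d i)) =>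
          (monomial (Finsupp.equivFunOnFinite.symm fun i => (a i : ℕ)) (1 : R))) ⊔
        (Ideal.span (Set.range fun i => X i ^ d i + τ • g i)).restrictScalars R := by
  classical
  set W := Submodule.span R (Set.range fun a : (∀ i, Fin (d i)) =>
          (monomial (Finsupp.equivFunOnFinite.symm fun i => (a i : ℕ)) (1 : R))) ⊔
        (Ideal.span (Set.range fun i => X i ^ d i + τ • g i)).restrictScalars R with hW
  set M := Submodule.span R ((fun a => monomial a (1:R)) '' {a : Fin n →₀ ℕ | a.degree ≤ D}) with hM
  have hfin : {a : Fin n →₀ ℕ | a.degree ≤ D}.Finite := Finsupp.finite_of_degree_le D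
  have hfg : (M.map W.mkQ).FG := (Submodule.fg_span (hfin.image _)).map _
  obtain ⟨r, hr, hr0⟩ := Submodule.exists_sub_one_mem_and_smul_eq_zero_of_fg_of_le_smul
    (Ideal.span {τ}) (M.map W.mkQ) hfg (by
      rw [Submodule.map_le_iff_le_comap]
      refine Submodule.span_le.2 ?_
      rintro _ ⟨a, ha, rfl⟩
      change W.mkQ (monomial a 1) ∈ Ideal.span {τ} • M.map W.mkQ
      by_cases hred : ∀ i, a i < d i
      · have : (monomial a (1:R)) ∈ W := by
          refine Submodule.mem_sup_left (Submodule.subset_span ⟨fun i => ⟨a i, hred i⟩, ?_⟩)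
          have hea : (Finsupp.equivFunOnFinite.symm fun i => a i) = a := by ext i; simp
          simp only [hea]
        rw [Submodule.mkQ_apply, (Submodule.Quotient.mk_eq_zero W).2 this]
        exact Submodule.zero_mem _
      · push Not at hred
        obtain ⟨i, hi⟩ := hred
        have hle : Finsupp.single i (d i) ≤ a := by simpa using hi
        set b := a - Finsupp.single i (d i) with hb
        have hab : b + Finsupp.single i (d i) = a := tsub_add_cancel_of_le hle
        have key : monomial a (1:R) =
            monomial b 1 * (X i ^ d i + τ • g i) + τ • (- (monomial b 1 * g i)) := by
          rw [mul_add, X_pow_eq_monomial, monomial_mul, hab]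
          simp
        have h1 : monomial b 1 * (X i ^ d i + τ • g i) ∈ W := by
          refine Submodule.mem_sup_right ?_
          exact Ideal.mul_mem_left _ _ (Ideal.subset_span ⟨i, rfl⟩)
        rw [key, map_add, Submodule.mkQ_apply, (Submodule.Quotient.mk_eq_zero W).2 h1, zero_add,
          map_smul]
        refine Submodule.smul_mem_smul (Ideal.subset_span rfl) (Submodule.mem_map_of_mem ?_)
        refine Submodule.neg_mem _ (bz_mem_span D _ ?_)
        refine (totalDegree_mul _ _).trans ?_
        have h2 : (monomial b (1:R)).totalDegree ≤ b.degree := totalDegree_monomial_le _ _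
        have h3 : b.degree + d i = a.degree := by
          rw [← hab, map_add]; simp
        have := hg i
        have : a.degree ≤ D := ha
        omega)
  refine ⟨r, hr, fun h hh => ?_⟩
  have := hr0 (W.mkQ h) (Submodule.mem_map_of_mem (bz_mem_span D h hh))
  rwa [← map_smul, Submodule.mkQ_apply, Submodule.Quotient.mk_eq_zero] at this

lemma bz_local {K : Type*} [Field K] [IsAlgClosed K] {n : ℕ}
    (f : Fin n → MvPolynomial (Fin n) K)
    (hZ : {p : Fin n → K | ∀ i, MvPolynomial.eval p (f i) = 0}.Finite)
    (F : Fin n → MvPolynomial (Fin n) (Polynomial K))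
    (hF : ∀ i, ∃ q, F i = map Polynomial.C (f i) + C Polynomial.X * q)
    (z : Fin n → K) (hz : ∀ i, eval z (f i) = 0)
    (c : Polynomial K) (hc : c ≠ 0) (h : MvPolynomial (Fin n) (Polynomial K))
    (hmem : C c * h ∈ Ideal.span (Set.range F)) : bzEval z h = 0 := by
  classical
  have hmap : ∀ w : MvPolynomial (Fin n) K, bzEval z (map Polynomial.C w) = eval z w := by
    intro w
    have : (bzEval z).comp (map Polynomial.C) = eval z := by
      apply MvPolynomial.ringHom_ext
      · intro r; simp [bzEval]
      · intro i; simp [bzEval]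
    rw [← this]; rfl
  have hmp : (RingHom.ker (bzEval z)).IsPrime := RingHom.ker_isPrime _
  have hle : Ideal.span (Set.range F) ≤ RingHom.ker (bzEval z) := by
    rw [Ideal.span_le]
    rintro _ ⟨i, rfl⟩
    obtain ⟨q, hq⟩ := hF i
    change bzEval z (F i) = 0
    rw [hq, map_add, hmap, hz i, map_mul]
    simp [bzEval]
  obtain ⟨p, hp, hpm⟩ := Ideal.exists_minimalPrimes_le hle
  have hpp : p.IsPrime := hp.1.1
  have hIp : Ideal.span (Set.range F) ≤ p := hp.1.2
  have ht : C Polynomial.X ∉ p := by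
    intro ht
    -- the contraction of `p` to `K[x]`
    let q := p.comap (map Polynomial.C : MvPolynomial (Fin n) K →+* _)
    have hqp : q.IsPrime := Ideal.IsPrime.comap _
    have hfq : ∀ i, f i ∈ q := by
      intro i
      obtain ⟨q', hq'⟩ := hF i
      change map Polynomial.C (f i) ∈ p
      have : map Polynomial.C (f i) = F i - C Polynomial.X * q' := by rw [hq']; ring
      rw [this]
      exact p.sub_mem (hIp (Ideal.subset_span ⟨i, rfl⟩)) (p.mul_mem_right _ ht)
    have hzl : zeroLocus K q ⊆ {p : Fin n → K | ∀ i, MvPolynomial.eval p (f i) = 0} := by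
      intro w hw i
      simpa [aeval_eq_eval] using hw (f i) (hfq i)
    have hv : hZ.toFinset.inf (fun w => vanishingIdeal K {w}) ≤ q := by
      rw [← IsPrime.vanishingIdeal_zeroLocus (K := K) q]
      intro g hg w hw
      have := (Submodule.mem_finsetInf.1 hg) w (hZ.mem_toFinset.2 (hzl hw))
      exact this w rfl
    obtain ⟨w, -, hw⟩ := (Ideal.IsPrime.inf_le' hqp).1 hv
    have hwz : w = z := by
      funext i
      have h1 : (X i - C (w i) : MvPolynomial (Fin n) K) ∈ q := hw (by simp)
      have h2 : bzEval z (map Polynomial.C (X i - C (w i))) = 0 := hpm h1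
      rw [hmap] at h2
      simp at h2
      exact (sub_eq_zero.1 h2).symm
    subst hwz
    have hmle : RingHom.ker (bzEval w) ≤ p := by
      intro g hg
      rw [RingHom.mem_ker] at hg
      have hquot : (Ideal.Quotient.mk p) = ((Ideal.Quotient.mk p).comp
          ((C : Polynomial K →+* _).comp Polynomial.C)).comp (bzEval w) := by
        apply MvPolynomial.ringHom_ext
        · intro r
          simp only [RingHom.comp_apply, bzEval, coe_eval₂Hom, eval₂_C, Polynomial.coe_evalRingHom]
          rw [Ideal.Quotient.eq, ← map_sub]
          have : Polynomial.X ∣ r - Polynomial.C (Polynomial.eval 0 r) := by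
            rw [Polynomial.X_dvd_iff]; simp [Polynomial.coeff_zero_eq_eval_zero]
          obtain ⟨s, hs⟩ := this
          rw [hs, map_mul]
          exact p.mul_mem_right _ ht
        · intro i
          simp only [RingHom.comp_apply, bzEval, coe_eval₂Hom, eval₂_X]
          rw [Ideal.Quotient.eq]
          have h1 : (X i - C (w i) : MvPolynomial (Fin n) K) ∈ q := hw (by simp)
          simpa [q] using h1
      rw [← Ideal.Quotient.eq_zero_iff_mem, hquot, RingHom.comp_apply, hg, map_zero]
    have h1 := (bz_height w).trans (Ideal.height_mono hmle)
    have h2 := Ideal.height_le_card_of_mem_minimalPrimes_span (Set.finite_range F) hp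
    have h3 : (Set.range F).ncard ≤ n := by
      rw [← Set.image_univ]
      refine (Set.ncard_image_le Set.finite_univ).trans ?_
      simp [Set.ncard_univ]
    have h4 := h1.trans h2
    have : n + 1 ≤ (Set.range F).ncard := by exact_mod_cast h4
    omega
  obtain ⟨c', hcc, hc'⟩ := Polynomial.exists_eq_pow_rootMultiplicity_mul_and_not_dvd c hc 0
  have hcp : C c ∉ p := by
    rw [hcc, map_mul, map_pow]
    intro hh
    rcases hpp.mem_or_mem hh with h1 | h1
    · have := hpp.mem_of_pow_mem _ h1
      simp at this
      exact ht this
    · have := hpm h1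
      simp [RingHom.mem_ker, bzEval] at this
      apply hc'
      simp [Polynomial.X_dvd_iff, Polynomial.coeff_zero_eq_eval_zero, this]
  exact hpm ((hpp.mem_or_mem (hIp hmem)).resolve_left hcp)

lemma bz_relation {R S ι : Type*} [CommRing R] [IsDomain R] [CommRing S] [Algebra R S] [Fintype ι]
    (I : Ideal S) (b : ι → S) (u : S) (r : R) 
    (hr : ∀ j ≤ Fintype.card ι, r • u ^ j ∈ Submodule.span R (Set.range b) ⊔ I.restrictScalars R) :
    ∃ P : Polynomial R, P ≠ 0 ∧ P.natDegree ≤ Fintype.card ι ∧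
      algebraMap R S r * Polynomial.aeval u P ∈ I := by
  classical
  have h1 : ∀ j : Fin (Fintype.card ι + 1), ∃ A : ι → R, r • u ^ (j : ℕ) - ∑ k, A k • b k ∈ I := by
    intro j
    obtain ⟨x, hx, y, hy, hxy⟩ := Submodule.mem_sup.1 (hr j (by omega))
    obtain ⟨A, hA⟩ := (Submodule.mem_span_range_iff_exists_fun R).1 hx
    refine ⟨A, ?_⟩
    rw [hA, ← hxy, add_sub_cancel_left]
    exact hy
  choose A hA using h1
  have hdep : ¬ LinearIndependent R A := by
    intro hli
    have := hli.fintype_card_le_finrank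
    simp at this
  obtain ⟨a, ha, j0, hj0⟩ := Fintype.not_linearIndependent_iff.1 hdep
  refine ⟨∑ j : Fin (Fintype.card ι + 1), Polynomial.monomial (j : ℕ) (a j), ?_, ?_, ?_⟩
  · intro h
    apply hj0
    have := congrArg (fun q => Polynomial.coeff q (j0 : ℕ)) h
    simpa [Polynomial.finsetSum_coeff, Polynomial.coeff_monomial, Fin.val_inj] using this
  · refine Polynomial.natDegree_sum_le_of_forall_le _ _ fun j _ => ?_
    exact (Polynomial.natDegree_monomial_le _).trans (by omega)
  · have h2 : ∑ j, a j • (r • u ^ (j : ℕ) - ∑ k, A j k • b k) ∈ I :=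
      I.sum_mem fun j _ => by
        rw [Algebra.smul_def]; exact I.mul_mem_left _ (hA j)
    have h3 : ∑ j, a j • ∑ k, A j k • b k = 0 := by
      simp_rw [Finset.smul_sum]
      rw [Finset.sum_comm]
      refine Finset.sum_eq_zero fun k _ => ?_
      have := congrFun ha k
      simp only [Finset.sum_apply, Pi.smul_apply, smul_eq_mul, Pi.zero_apply] at this
      simp_rw [smul_smul]
      rw [← Finset.sum_smul, this, zero_smul]
    simp_rw [smul_sub] at h2
    rw [Finset.sum_sub_distrib, h3, sub_zero] at h2
    convert h2 using 1
    rw [map_sum, Finset.mul_sum]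
    refine Finset.sum_congr rfl fun j _ => ?_
    rw [Polynomial.aeval_monomial, Algebra.smul_def, Algebra.smul_def]
    ring

theorem bezout_degree_product {K : Type*} [Field K] [IsAlgClosed K] (n : ℕ) (hn : 1 ≤ n)
    (f : Fin n → MvPolynomial (Fin n) K) (hf : ∀ i, f i ≠ 0)
    (hZ : {p : Fin n → K | ∀ i, MvPolynomial.eval p (f i) = 0}.Finite) :
    {p : Fin n → K | ∀ i, MvPolynomial.eval p (f i) = 0}.ncard ≤
      ∏ i, (f i).totalDegree := by
  classical
  have : Infinite K := IsAlgClosed.instInfinite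
  obtain ⟨c, hc⟩ := bz_sep hZ.toFinset
  let d : Fin n → ℕ := fun i => (f i).totalDegree
  have hcard : Fintype.card (∀ i, Fin (d i)) = ∏ i, (f i).totalDegree := by simp [d]
  let g : Fin n → MvPolynomial (Fin n) (Polynomial K) := fun i =>
    map Polynomial.C (f i) - X i ^ d i
  have hg : ∀ i, (g i).totalDegree ≤ d i := by
    intro i
    refine (totalDegree_sub _ _).trans (max_le ?_ ?_)
    · exact Finset.sup_mono (support_map_subset _ _)
    · exact (totalDegree_X_pow _ _).le
  let u : MvPolynomial (Fin n) (Polynomial K) := ∑ i, C (Polynomial.C (c i)) * X i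
  have hu : u.totalDegree ≤ 1 := by
    refine totalDegree_finsetSum_le fun i _ => ?_
    refine (totalDegree_mul _ _).trans ?_
    simp
  let τ : Polynomial K := 1 - Polynomial.X
  obtain ⟨r, hr, hred⟩ := bz_nakayama d g hg τ (∏ i, (f i).totalDegree)
  have hr0 : r ≠ 0 := by
    rintro rfl
    obtain ⟨s, hs⟩ := Ideal.mem_span_singleton.1 hr
    have := congrArg (Polynomial.eval 1) hs
    simp [τ] at this
  obtain ⟨P, hP0, hPdeg, hP⟩ := bz_relation _ _ u r (fun j hj => hred (u ^ j) (by
    refine (totalDegree_pow _ _).trans ?_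
    rw [hcard] at hj
    nlinarith))
  rw [hcard] at hPdeg
  have hcont : P.content ≠ 0 := by simpa [Polynomial.content_eq_zero_iff] using hP0
  let Q := P.primPart
  have hQ : Q.map (Polynomial.evalRingHom 0) ≠ 0 := by
    intro h0
    have hdvd : Polynomial.C Polynomial.X ∣ Q := by
      rw [Polynomial.C_dvd_iff_dvd_coeff]
      intro k
      have := congrArg (fun q => Polynomial.coeff q k) h0
      rw [Polynomial.X_dvd_iff, Polynomial.coeff_zero_eq_eval_zero]
      simpa using this
    exact Polynomial.not_isUnit_X (P.isPrimitive_primPart _ hdvd)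
  have hvan : ∀ z : Fin n → K, (∀ i, eval z (f i) = 0) →
      (Q.map (Polynomial.evalRingHom 0)).eval (∑ i, c i * z i) = 0 := by
    intro z hz
    have h1 := bz_local f hZ (fun i => X i ^ d i + τ • g i) (fun i => ⟨- g i, by
      simp only [g, τ, smul_eq_C_mul, map_sub, map_one]; ring⟩) z hz (r * P.content)
      (mul_ne_zero hr0 hcont) (Polynomial.aeval u Q) (by
        convert hP using 1
        conv_rhs => rw [P.eq_C_content_mul_primPart]
        rw [map_mul, map_mul, Polynomial.aeval_C, mul_assoc]
        rfl)
    rw [Polynomial.aeval_def, Polynomial.hom_eval₂] at h1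
    rw [Polynomial.eval_map]
    have h2 : (bzEval z).comp (algebraMap (Polynomial K) (MvPolynomial (Fin n) (Polynomial K)))
        = Polynomial.evalRingHom 0 := by
      refine RingHom.ext fun x => ?_
      simp [bzEval, algebraMap_eq]
    have h3 : bzEval z u = ∑ i, c i * z i := by
      simp [u, bzEval]
    rw [h2, h3] at h1
    exact h1
  rw [Set.ncard_eq_toFinset_card _ hZ, ← Finset.card_image_of_injOn hc]
  calc _ ≤ (Q.map (Polynomial.evalRingHom 0)).roots.toFinset.card := by
        refine Finset.card_le_card fun x hx => ?_
        obtain ⟨z, hz, rfl⟩ := Finset.mem_image.1 hx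
        rw [Multiset.mem_toFinset, Polynomial.mem_roots hQ]
        exact hvan z (hZ.mem_toFinset.1 hz)
    _ ≤ (Q.map (Polynomial.evalRingHom 0)).roots.card := Multiset.toFinset_card_le _
    _ ≤ (Q.map (Polynomial.evalRingHom 0)).natDegree := Polynomial.card_roots' _
    _ ≤ Q.natDegree := Polynomial.natDegree_map_le
    _ = P.natDegree := P.natDegree_primPart
    _ ≤ _ := hPdeg
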